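/- (Ehrenfeucht) Let S be a Scott set and M a countable non-standard model of PA with SSy(M) ⊆ S. Then for every X ∈ S there exists a countable elementary extension N of M such that X ∈ SSy(N) ⊆ S. -/

import Mathlib

open FirstOrder FirstOrder.Language

/-- Function symbols of the language of arithmetic: `0`, `1`, `+`, `·`. -/
inductive arithFunc : ℕ → Type
  | zero : arithFunc 0
  | one : arithFunc 0
  | add : arithFunc 2
  | mul : arithFunc 2
  deriving DecidableEq

/-- Relation symbols of the language of arithmetic: `<`. -/
inductive arithRel : ℕ → Type
  | lt : arithRel 2
  deriving DecidableEq

/-- The first-order language of arithmetic `{0, 1, +, ·, <}`. -/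
def arith : FirstOrder.Language := ⟨arithFunc, arithRel⟩

namespace Arith

variable {M : Type*} [arith.Structure M]

/-- The interpretation of `0`. -/
def zeroM (M : Type*) [arith.Structure M] : M :=
  Structure.funMap (L := arith) arithFunc.zero ![]

/-- The interpretation of `1`. -/
def oneM (M : Type*) [arith.Structure M] : M :=
  Structure.funMap (L := arith) arithFunc.one ![]

/-- The interpretation of `+`. -/
def addM (x y : M) : M := Structure.funMap (L := arith) arithFunc.add ![x, y]

/-- The interpretation of `·`. -/
def mulM (x y : M) : M := Structure.funMap (L := arith) arithFunc.mul ![x, y]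

/-- The interpretation of `<`. -/
def ltM (x y : M) : Prop := Structure.RelMap (L := arith) arithRel.lt ![x, y]

/-- Non-strict order. -/
def leM (x y : M) : Prop := ltM x y ∨ x = y

/-- The numeral `n` in `M`: `0`, or `1 + 1 + ⋯ + 1`. -/
def numeral (M : Type*) [arith.Structure M] : ℕ → M
  | 0 => zeroM M
  | n + 1 => addM (numeral M n) (oneM M)

/-- The standard `arith`-structure on `ℕ`. -/
instance : arith.Structure ℕ where
  funMap {n} f v :=
    match f with
    | .zero => 0
    | .one => 1
    | .add => v 0 + v 1
    | .mul => v 0 * v 1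
  RelMap {n} r v :=
    match r with
    | .lt => v 0 < v 1

/-- `M` is a model of Peano arithmetic: it satisfies the finitely many basic axioms of
`PA` together with induction for all parametrically definable sets (which is equivalent
to the usual first-order induction scheme). -/
def IsPAModel (M : Type*) [arith.Structure M] : Prop :=
  (∀ x : M, addM x (zeroM M) = x) ∧
  (∀ x y : M, addM x (addM y (oneM M)) = addM (addM x y) (oneM M)) ∧
  (∀ x : M, mulM x (zeroM M) = zeroM M) ∧
  (∀ x y : M, mulM x (addM y (oneM M)) = addM (mulM x y) x) ∧
  (∀ x : M, ¬ ltM x (zeroM M)) ∧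
  (∀ x y : M, ltM x (addM y (oneM M)) ↔ (ltM x y ∨ x = y)) ∧
  (∀ x : M, addM x (oneM M) ≠ zeroM M) ∧
  (∀ x y : M, addM x (oneM M) = addM y (oneM M) → x = y) ∧
  (∀ s : Set M, Set.Definable₁ (Set.univ : Set M) arith s →
    zeroM M ∈ s → (∀ x ∈ s, addM x (oneM M) ∈ s) → ∀ x : M, x ∈ s)

/-- An element of `M` is standard if it is a numeral. -/
def IsStd (x : M) : Prop := ∃ n : ℕ, x = numeral M n

/-- `M` is a non-standard model of `PA`: a model of `PA` not isomorphic to the standard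
model `ℕ`. -/
def NonstandardModel (M : Type*) [arith.Structure M] : Prop :=
  IsPAModel M ∧ ¬ Nonempty (M ≃[arith] ℕ)

/-- `(x)_i = 1`: the `i`-th binary digit of `x` is `1`, for standard `i`.  This is expressed
by saying that `x = u·2^(i+1) + (2^i + v)` with `v < 2^i`, where `2^i`, `2^(i+1)` are
numerals. -/
def digitB (x : M) (i : ℕ) : Prop :=
  ∃ u v : M, x = addM (mulM u (numeral M (2 ^ (i + 1)))) (addM (numeral M (2 ^ i)) v) ∧
    ltM v (numeral M (2 ^ i))

/-- The standard system of `M`: the collection of subsets of `ℕ` coded by some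
non-standard element of `M` (via its standard binary digits). -/
def SSy (M : Type*) [arith.Structure M] : Set (Set ℕ) :=
  {X | ∃ a : M, ¬ IsStd a ∧ ∀ i : ℕ, i ∈ X ↔ digitB a i}

/-- A function `M → M` is definable (with parameters) if its graph is a definable set. -/
def DefinableFun₁ (f : M → M) : Prop :=
  Set.Definable (Set.univ : Set M) arith {v : Fin 2 → M | f (v 0) = v 1}

/-- A `k`-ary function `M^k → M` is definable (with parameters) if its graph is a
definable set. -/
def DefinableFun {k : ℕ} (F : (Fin k → M) → M) : Prop :=
  Set.Definable (Set.univ : Set M) arith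
    {v : Fin (k + 1) → M | F (fun i => v i.castSucc) = v (Fin.last k)}

/-- `c` is the internal cardinality of the set `D ⊆ M`: there is an `M`-definable
bijection between `{x : x < c}` and `D`. -/
def InternalCard (D : Set M) (c : M) : Prop :=
  ∃ f : M → M, DefinableFun₁ f ∧ Set.BijOn f {x : M | ltM x c} D

/-- `y = 2^x` in the model `M`, expressed via the existence of a definable function
satisfying the recursion of the base-`2` exponential up to `x`. -/
def IsPow2 (x y : M) : Prop :=
  ∃ f : M → M, DefinableFun₁ f ∧ f (zeroM M) = oneM M ∧
    (∀ z : M, ltM z x → f (addM z (oneM M)) = addM (f z) (f z)) ∧ f x = y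

end Arith

namespace Arith

/-- Relativized partial recursiveness: `RecursiveIn O f` means the partial function `f`
is partial recursive in the total oracle `O`.  This mirrors `Nat.Partrec`, with an extra
constructor for the oracle. -/
inductive RecursiveIn (O : ℕ → ℕ) : (ℕ →. ℕ) → Prop
  | zero : RecursiveIn O (pure 0)
  | succ : RecursiveIn O Nat.succ
  | left : RecursiveIn O ↑fun n : ℕ => n.unpair.1
  | right : RecursiveIn O ↑fun n : ℕ => n.unpair.2
  | oracle : RecursiveIn O O
  | pair {f g} : RecursiveIn O f → RecursiveIn O g →
      RecursiveIn O fun n => Nat.pair <$> f n <*> g n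
  | comp {f g} : RecursiveIn O f → RecursiveIn O g → RecursiveIn O fun n => g n >>= f
  | prec {f g} : RecursiveIn O f → RecursiveIn O g → RecursiveIn O (Nat.unpaired fun a n =>
      n.rec (f a) fun y IH => do let i ← IH; g (Nat.pair a (Nat.pair y i)))
  | rfind {f} : RecursiveIn O f →
      RecursiveIn O fun a => Nat.rfind fun n => (fun m => m = 0) <$> f (Nat.pair a n)

open Classical in
/-- The characteristic function of a set of natural numbers. -/
noncomputable def charFn (X : Set ℕ) : ℕ → ℕ := fun n => if n ∈ X then 1 else 0

/-- Turing reducibility between sets of natural numbers. -/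
def TuringLE (Y X : Set ℕ) : Prop := RecursiveIn (charFn X) (charFn Y)

/-- The Turing join `X ⊕ Y = 2X ∪ (2Y + 1)`. -/
def turingJoin (X Y : Set ℕ) : Set ℕ :=
  {n | ∃ m ∈ X, n = 2 * m} ∪ {n | ∃ m ∈ Y, n = 2 * m + 1}

/-- A Turing ideal: a collection of subsets of `ℕ` closed under Turing join and Turing
reducibility. -/
def TuringIdeal (S : Set (Set ℕ)) : Prop :=
  (∀ X ∈ S, ∀ Y ∈ S, turingJoin X Y ∈ S) ∧
  (∀ X ∈ S, ∀ Y : Set ℕ, TuringLE Y X → Y ∈ S)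

/-- The Turing ideal generated by a collection of subsets of `ℕ`. -/
def tIdealGen (C : Set (Set ℕ)) : Set (Set ℕ) :=
  ⋂₀ {I | TuringIdeal I ∧ C ⊆ I}

/-- `T ⊆ ℕ` codes a binary tree: the set of finite binary sequences whose codes lie in
`T` is closed under initial segments. -/
def IsBinTreeSet (T : Set ℕ) : Prop :=
  ∀ s : List Bool, Encodable.encode s ∈ T → ∀ t : List Bool, t <+: s → Encodable.encode t ∈ T

/-- The tree coded by `T` is infinite. -/
def TreeInf (T : Set ℕ) : Prop := {s : List Bool | Encodable.encode s ∈ T}.Infinite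

/-- `P ⊆ ℕ`, viewed as an infinite branch via its characteristic function, is a path
through the tree coded by `T`. -/
def PathThrough (P T : Set ℕ) : Prop :=
  ∀ f : ℕ → Bool, (∀ i : ℕ, f i = true ↔ i ∈ P) →
    ∀ m : ℕ, Encodable.encode (List.ofFn fun i : Fin m => f i) ∈ T

/-- A Scott set: a nonempty Turing ideal such that every infinite binary tree in it has
an infinite path in it. -/
def ScottSet (S : Set (Set ℕ)) : Prop :=
  S.Nonempty ∧ TuringIdeal S ∧
  ∀ T ∈ S, IsBinTreeSet T → TreeInf T → ∃ P ∈ S, PathThrough P T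

open Classical in
/-- The characteristic function of a set, with values in `Bool`. -/
noncomputable def chi (X : Set ℕ) : ℕ → Bool := fun n => if n ∈ X then true else false

/-- The iterated Turing join `⊕_{i<k} X i`. -/
def joinMany : {k : ℕ} → (Fin k → Set ℕ) → Set ℕ
  | 0, _ => ∅
  | (k + 1), X => turingJoin (joinMany fun i => X i.castSucc) (X (Fin.last k))

end Arith

namespace Arith

theorem vec_eta {K : Type*} (v : Fin 2 → K) : ![v 0, v 1] = v := by
  ext i; fin_cases i <;> rfl

section Definability

variable {M : Type} [arith.Structure M] {n : ℕ}

/-- A predicate on tuples is definable with parameters. -/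
def DP (P : (Fin n → M) → Prop) : Prop :=
  Set.Definable (Set.univ : Set M) arith {v | P v}

/-- A function on tuples is definable with parameters. -/
def DF (t : (Fin n → M) → M) : Prop :=
  Set.DefinableFun arith (Set.univ : Set M) t

theorem DF.var (i : Fin n) : DF (fun v : Fin n → M => v i) :=
  Set.DefinableFun.proj arith

theorem DF.const (a : M) : DF (fun _ : Fin n → M => a) :=
  definableFun_const arith (Fin n) (Set.mem_univ a)

theorem DF.comp {m : ℕ} {f : (Fin m → M) → M} {g : (Fin n → M) → Fin m → M} (hf : DF f)
    (hg : ∀ i, DF fun v => g v i) : DF fun v => f (g v) :=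
  Set.DefinableFun.comp (g := g) hg hf

theorem DF.funMap {m : ℕ} (F : arith.Functions m) {g : Fin m → (Fin n → M) → M}
    (hg : ∀ i, DF (g i)) : DF fun v => Structure.funMap F fun i => g i v :=
  DF.comp (f := Structure.funMap F) (g := fun v i => g i v)
    (Set.DefinableFun.of_empty (Set.DefinableFun.fun_symbol F)) hg

theorem DF.comp₁ {f : M → M} (hf : DF fun v : Fin 1 → M => f (v 0)) {t : (Fin n → M) → M}
    (ht : DF t) : DF fun v => f (t v) :=
  DF.comp (f := fun v : Fin 1 → M => f (v 0)) (g := fun v => ![t v]) hf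
    (by simpa [Fin.forall_fin_succ] using ht)

theorem DF.comp₂ {f : M → M → M} (hf : DF fun v : Fin 2 → M => f (v 0) (v 1))
    {t u : (Fin n → M) → M} (ht : DF t) (hu : DF u) : DF fun v => f (t v) (u v) :=
  DF.comp (f := fun v : Fin 2 → M => f (v 0) (v 1)) (g := fun v => ![t v, u v]) hf
    (by simpa [Fin.forall_fin_succ] using ⟨ht, hu⟩)

theorem DF.add {t u : (Fin n → M) → M} (ht : DF t) (hu : DF u) :
    DF fun v => addM (t v) (u v) :=
  DF.comp₂ (f := addM) (by
    simp only [addM, vec_eta]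
    exact Set.DefinableFun.of_empty (Set.DefinableFun.fun_symbol (L := arith) arithFunc.add)) ht hu

theorem DF.mul {t u : (Fin n → M) → M} (ht : DF t) (hu : DF u) :
    DF fun v => mulM (t v) (u v) :=
  DF.comp₂ (f := mulM) (by
    simp only [mulM, vec_eta]
    exact Set.DefinableFun.of_empty (Set.DefinableFun.fun_symbol (L := arith) arithFunc.mul)) ht hu

theorem DP.preimage {m : ℕ} {P : (Fin m → M) → Prop} {g : (Fin n → M) → Fin m → M} (hP : DP P)
    (hg : ∀ i, DF fun v => g v i) : DP fun v => P (g v) :=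
  Set.Definable.preimage_map (F := g) hg hP

theorem DP.comp₁ {P : M → Prop} (hP : DP fun v : Fin 1 → M => P (v 0))
    {t : (Fin n → M) → M} (ht : DF t) : DP fun v => P (t v) :=
  DP.preimage (P := fun v : Fin 1 → M => P (v 0)) (g := fun v => ![t v]) hP
    (by simpa [Fin.forall_fin_succ] using ht)

theorem DP.comp₂ {P : M → M → Prop} (hP : DP fun v : Fin 2 → M => P (v 0) (v 1))
    {t u : (Fin n → M) → M} (ht : DF t) (hu : DF u) : DP fun v => P (t v) (u v) :=
  DP.preimage (P := fun v : Fin 2 → M => P (v 0) (v 1)) (g := fun v => ![t v, u v]) hP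
    (by simpa [Fin.forall_fin_succ] using ⟨ht, hu⟩)

theorem DP.eq {t u : (Fin n → M) → M} (ht : DF t) (hu : DF u) : DP fun v => t v = u v :=
  Set.DefinableFun.ofPred_eq ht hu

theorem DP.lt {t u : (Fin n → M) → M} (ht : DF t) (hu : DF u) : DP fun v => ltM (t v) (u v) :=
  DP.comp₂ (P := ltM) (by
    refine Set.Definable.mono (Set.empty_definable_iff.2 ⟨Relations.formula₂ (L := arith)
      (show arith.Relations 2 from arithRel.lt) (Term.var 0) (Term.var 1), ?_⟩)
      (Set.empty_subset _)
    ext v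
    rw [Set.mem_ofPred_eq, Set.mem_ofPred_eq, Formula.realize_rel₂]
    rfl) ht hu

theorem DP.and {P Q : (Fin n → M) → Prop} (hP : DP P) (hQ : DP Q) : DP fun v => P v ∧ Q v :=
  Set.Definable.inter hP hQ

theorem DP.or {P Q : (Fin n → M) → Prop} (hP : DP P) (hQ : DP Q) : DP fun v => P v ∨ Q v :=
  Set.Definable.union hP hQ

theorem DP.not {P : (Fin n → M) → Prop} (hP : DP P) : DP fun v => ¬ P v :=
  Set.Definable.compl hP

theorem DP.imp {P Q : (Fin n → M) → Prop} (hP : DP P) (hQ : DP Q) : DP fun v => P v → Q v := by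
  simpa only [imp_iff_not_or] using hP.not.or hQ

theorem DP.iff {P Q : (Fin n → M) → Prop} (hP : DP P) (hQ : DP Q) : DP fun v => P v ↔ Q v := by
  simpa only [iff_iff_implies_and_implies] using (hP.imp hQ).and (hQ.imp hP)

theorem DP.ex {P : (Fin n → M) → M → Prop}
    (h : DP fun v : Fin (n + 1) → M => P (fun i => v i.castSucc) (v (Fin.last n))) :
    DP fun v => ∃ y, P v y := by
  have := Set.Definable.exists_of_finite (Set.Definable.preimage_comp
    (fun i : Fin (n + 1) => (Fin.lastCases (Sum.inr 0) (fun j => Sum.inl j) i : Fin n ⊕ Fin 1)) h)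
  unfold DP
  convert! this using 1
  ext v
  simp only [Set.mem_ofPred_eq, Set.mem_preimage, Function.comp, Fin.lastCases_castSucc,
    Fin.lastCases_last, Sum.elim_inl, Sum.elim_inr]
  exact ⟨fun ⟨y, hy⟩ => ⟨fun _ => y, hy⟩, fun ⟨u, hu⟩ => ⟨u 0, hu⟩⟩

theorem DP.all {P : (Fin n → M) → M → Prop}
    (h : DP fun v : Fin (n + 1) → M => P (fun i => v i.castSucc) (v (Fin.last n))) :
    DP fun v => ∀ y, P v y := by
  simpa only [not_exists, not_not] using (DP.ex (P := fun v y => ¬ P v y) h.not).not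

end Definability

section Semiring

variable {M : Type} [arith.Structure M]

theorem IsPAModel.induct (h : IsPAModel M) {P : M → Prop} (hP : DP fun v : Fin 1 → M => P (v 0))
    (h0 : P (zeroM M)) (hs : ∀ x, P x → P (addM x (oneM M))) (x : M) : P x :=
  h.2.2.2.2.2.2.2.2 {x | P x} hP h0 hs x

theorem IsPAModel.add_zero (h : IsPAModel M) (x : M) : addM x (zeroM M) = x := h.1 x

theorem IsPAModel.add_succ (h : IsPAModel M) (x y : M) :
    addM x (addM y (oneM M)) = addM (addM x y) (oneM M) := h.2.1 x y

theorem IsPAModel.mul_zero (h : IsPAModel M) (x : M) : mulM x (zeroM M) = zeroM M := h.2.2.1 x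

theorem IsPAModel.mul_succ (h : IsPAModel M)
    (x y : M) : mulM x (addM y (oneM M)) = addM (mulM x y) x :=
  h.2.2.2.1 x y

theorem IsPAModel.not_lt_zero (h : IsPAModel M) (x : M) : ¬ ltM x (zeroM M) := h.2.2.2.2.1 x

theorem IsPAModel.lt_succ (h : IsPAModel M) (x y : M) : ltM x (addM y (oneM M)) ↔ ltM x y ∨ x = y :=
  h.2.2.2.2.2.1 x y

theorem IsPAModel.succ_ne_zero (h : IsPAModel M)
    (x : M) : addM x (oneM M) ≠ zeroM M := h.2.2.2.2.2.2.1 x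

theorem IsPAModel.succ_inj (h : IsPAModel M)
    {x y : M} (e : addM x (oneM M) = addM y (oneM M)) : x = y :=
  h.2.2.2.2.2.2.2.1 x y e

theorem IsPAModel.zero_add (h : IsPAModel M) (x : M) : addM (zeroM M) x = x := by
  refine h.induct (P := fun x => addM (zeroM M) x = x) ?_ (h.add_zero _) (fun y hy => ?_) x
  · apply_rules [DP.eq, DF.add, DF.var, DF.const]
  · rw [h.add_succ, hy]

theorem IsPAModel.succ_add (h : IsPAModel M) (x y : M) :
    addM (addM x (oneM M)) y = addM (addM x y) (oneM M) := by
  refine h.induct (P := fun y => addM (addM x (oneM M)) y = addM (addM x y) (oneM M)) ?_ ?_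
    (fun y hy => ?_) y
  · apply_rules [DP.eq, DF.add, DF.var, DF.const]
  · rw [h.add_zero, h.add_zero]
  · rw [h.add_succ, hy, h.add_succ]

theorem IsPAModel.add_comm (h : IsPAModel M) (x y : M) : addM x y = addM y x := by
  refine h.induct (P := fun y => addM x y = addM y x) ?_ ?_ (fun y hy => ?_) y
  · apply_rules [DP.eq, DF.add, DF.var, DF.const]
  · rw [h.add_zero, h.zero_add]
  · rw [h.add_succ, hy, h.succ_add]

theorem IsPAModel.add_assoc (h : IsPAModel M)
    (x y z : M) : addM (addM x y) z = addM x (addM y z) := by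
  refine h.induct (P := fun z => addM (addM x y) z = addM x (addM y z)) ?_ ?_ (fun z hz => ?_) z
  · apply_rules [DP.eq, DF.add, DF.var, DF.const]
  · rw [h.add_zero, h.add_zero]
  · rw [h.add_succ, hz, h.add_succ, h.add_succ]

theorem IsPAModel.add_left_comm (h : IsPAModel M)
    (x y z : M) : addM x (addM y z) = addM y (addM x z) := by
  rw [← h.add_assoc, h.add_comm x y, h.add_assoc]

theorem IsPAModel.add_right_cancel (h : IsPAModel M)
    {x y z : M} (e : addM x z = addM y z) : x = y := by
  refine h.induct (P := fun z => addM x z = addM y z → x = y) ?_ ?_ (fun z hz => ?_) z e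
  · apply_rules [DP.imp, DP.eq, DF.add, DF.var, DF.const]
  · rw [h.add_zero, h.add_zero]; exact id
  · rw [h.add_succ, h.add_succ]; exact fun e => hz (h.succ_inj e)

theorem IsPAModel.zero_mul (h : IsPAModel M) (x : M) : mulM (zeroM M) x = zeroM M := by
  refine h.induct (P := fun x => mulM (zeroM M) x = zeroM M) ?_ (h.mul_zero _) (fun y hy => ?_) x
  · apply_rules [DP.eq, DF.mul, DF.var, DF.const]
  · rw [h.mul_succ, hy, h.add_zero]

theorem IsPAModel.succ_mul (h : IsPAModel M)
    (x y : M) : mulM (addM x (oneM M)) y = addM (mulM x y) y := by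
  refine h.induct (P := fun y => mulM (addM x (oneM M)) y = addM (mulM x y) y) ?_ ?_
    (fun y hy => ?_) y
  · apply_rules [DP.eq, DF.add, DF.mul, DF.var, DF.const]
  · rw [h.mul_zero, h.mul_zero, h.add_zero]
  · rw [h.mul_succ, hy, h.mul_succ, h.add_assoc, h.add_assoc, h.add_left_comm y]

theorem IsPAModel.mul_comm (h : IsPAModel M) (x y : M) : mulM x y = mulM y x := by
  refine h.induct (P := fun y => mulM x y = mulM y x) ?_ ?_ (fun y hy => ?_) y
  · apply_rules [DP.eq, DF.mul, DF.var, DF.const]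
  · rw [h.mul_zero, h.zero_mul]
  · rw [h.mul_succ, hy, h.succ_mul]

theorem IsPAModel.mul_add (h : IsPAModel M)
    (x y z : M) : mulM x (addM y z) = addM (mulM x y) (mulM x z) := by
  refine h.induct (P := fun z => mulM x (addM y z) = addM (mulM x y) (mulM x z)) ?_ ?_
    (fun z hz => ?_) z
  · apply_rules [DP.eq, DF.add, DF.mul, DF.var, DF.const]
  · rw [h.add_zero, h.mul_zero, h.add_zero]
  · rw [h.add_succ, h.mul_succ, hz, h.mul_succ, h.add_assoc]

theorem IsPAModel.mul_assoc (h : IsPAModel M)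
    (x y z : M) : mulM (mulM x y) z = mulM x (mulM y z) := by
  refine h.induct (P := fun z => mulM (mulM x y) z = mulM x (mulM y z)) ?_ ?_ (fun z hz => ?_) z
  · apply_rules [DP.eq, DF.mul, DF.var, DF.const]
  · rw [h.mul_zero, h.mul_zero, h.mul_zero]
  · rw [h.mul_succ, hz, h.mul_succ, h.mul_add]

theorem IsPAModel.mul_one (h : IsPAModel M) (x : M) : mulM x (oneM M) = x := by
  rw [← h.zero_add (oneM M), h.mul_succ, h.mul_zero, h.zero_add]

theorem IsPAModel.eq_zero_or_succ (h : IsPAModel M)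
    (x : M) : x = zeroM M ∨ ∃ y, x = addM y (oneM M) := by
  refine h.induct (P := fun x => x = zeroM M ∨ ∃ y, x = addM y (oneM M)) ?_ (.inl rfl)
    (fun y _ => .inr ⟨y, rfl⟩) x
  apply_rules [DP.or, DP.ex, DP.eq, DF.add, DF.var, DF.const]

theorem IsPAModel.lt_iff (h : IsPAModel M)
    (x y : M) : ltM x y ↔ ∃ z, addM x (addM z (oneM M)) = y := by
  refine h.induct (P := fun y => ltM x y ↔ ∃ z, addM x (addM z (oneM M)) = y) ?_ ?_
    (fun y hy => ?_) y
  · apply_rules [DP.iff, DP.ex, DP.eq, DP.lt, DF.add, DF.var, DF.const]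
  · refine ⟨fun e => (h.not_lt_zero _ e).elim, fun ⟨z, e⟩ => ?_⟩
    rw [h.add_succ] at e
    exact (h.succ_ne_zero _ e).elim
  · rw [h.lt_succ, hy]
    constructor
    · rintro (⟨z, rfl⟩ | rfl)
      · exact ⟨addM z (oneM M), h.add_succ _ _⟩
      · exact ⟨zeroM M, by rw [h.zero_add]⟩
    · rintro ⟨z, e⟩
      rw [h.add_succ] at e
      have e := h.succ_inj e
      rcases h.eq_zero_or_succ z with rfl | ⟨w, rfl⟩
      · exact .inr (by rw [← e, h.add_zero])
      · exact .inl ⟨w, e⟩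

theorem IsPAModel.le_iff (h : IsPAModel M) (x y : M) : leM x y ↔ ∃ z, addM x z = y := by
  unfold leM
  rw [h.lt_iff]
  constructor
  · rintro (⟨z, rfl⟩ | rfl)
    · exact ⟨_, rfl⟩
    · exact ⟨zeroM M, h.add_zero x⟩
  · rintro ⟨z, rfl⟩
    rcases h.eq_zero_or_succ z with rfl | ⟨w, rfl⟩
    · exact .inr (h.add_zero x).symm
    · exact .inl ⟨w, rfl⟩

theorem IsPAModel.le_total (h : IsPAModel M) (x y : M) : leM x y ∨ leM y x := by
  refine h.induct (P := fun y => leM x y ∨ leM y x) ?_ ?_ (fun y hy => ?_) y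
  · unfold leM
    apply_rules [DP.or, DP.eq, DP.lt, DF.var, DF.const]
  · exact .inr ((h.le_iff _ _).2 ⟨x, h.zero_add x⟩)
  · simp only [h.le_iff] at hy ⊢
    rcases hy with ⟨z, rfl⟩ | ⟨z, rfl⟩
    · exact .inl ⟨addM z (oneM M), h.add_succ _ _⟩
    · rcases h.eq_zero_or_succ z with rfl | ⟨w, rfl⟩
      · exact .inl ⟨oneM M, by rw [h.add_zero]⟩
      · exact .inr ⟨w, by rw [h.succ_add, h.add_succ]⟩

theorem IsPAModel.eq_zero_of_add (h : IsPAModel M)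
    {x y : M} (e : addM x y = zeroM M) : y = zeroM M := by
  rcases h.eq_zero_or_succ y with rfl | ⟨w, rfl⟩
  · rfl
  · rw [h.add_succ] at e
    exact (h.succ_ne_zero _ e).elim

theorem IsPAModel.eq_zero_of_add_eq_self (h : IsPAModel M)
    {x y : M} (e : addM x y = x) : y = zeroM M := by
  refine h.add_right_cancel (z := x) ?_
  rw [h.add_comm, e, h.zero_add]

theorem IsPAModel.le_antisymm (h : IsPAModel M)
    {x y : M} (hxy : leM x y) (hyx : leM y x) : x = y := by
  rw [h.le_iff] at hxy hyx
  obtain ⟨z, rfl⟩ := hxy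
  obtain ⟨w, e⟩ := hyx
  rw [h.add_assoc] at e
  have e := h.eq_zero_of_add_eq_self e
  rw [h.add_comm] at e
  rw [h.eq_zero_of_add e, h.add_zero]

theorem IsPAModel.not_lt_self (h : IsPAModel M) (x : M) : ¬ ltM x x := by
  rw [h.lt_iff]
  rintro ⟨z, e⟩
  exact h.succ_ne_zero _ (h.eq_zero_of_add_eq_self e)

end Semiring

section Instances

variable {M : Type} [arith.Structure M] [h : Fact (IsPAModel M)]

instance : CommSemiring M where
  add := addM
  mul := mulM
  zero := zeroM M
  one := oneM M
  add_assoc := h.out.add_assoc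
  zero_add := h.out.zero_add
  add_zero := h.out.add_zero
  add_comm := h.out.add_comm
  mul_assoc := h.out.mul_assoc
  one_mul x := (h.out.mul_comm _ _).trans (h.out.mul_one x)
  mul_one := h.out.mul_one
  mul_comm := h.out.mul_comm
  left_distrib := h.out.mul_add
  right_distrib x y z := show mulM (addM x y) z = addM (mulM x z) (mulM y z) by
    rw [h.out.mul_comm, h.out.mul_add, h.out.mul_comm z, h.out.mul_comm z]
  zero_mul := h.out.zero_mul
  mul_zero := h.out.mul_zero
  nsmul := @nsmulRec M ⟨zeroM M⟩ ⟨addM⟩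

noncomputable instance : LinearOrder M where
  le := leM
  lt := ltM
  le_refl x := .inr rfl
  le_trans x y z hxy hyz := by
    rw [h.out.le_iff] at hxy hyz ⊢
    obtain ⟨u, rfl⟩ := hxy
    obtain ⟨v, rfl⟩ := hyz
    exact ⟨_, (h.out.add_assoc _ _ _).symm⟩
  lt_iff_le_not_ge x y := by
    constructor
    · intro hxy
      refine ⟨.inl hxy, fun hyx => ?_⟩
      obtain rfl := h.out.le_antisymm (.inl hxy) hyx
      exact h.out.not_lt_self _ hxy
    · rintro ⟨hxy | rfl, hyx⟩
      · exact hxy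
      · exact (hyx (.inr rfl)).elim
  le_antisymm x y := h.out.le_antisymm
  le_total := h.out.le_total
  toDecidableLE := Classical.decRel _

instance : CanonicallyOrderedAdd M where
  exists_add_of_le {x y} hxy := by
    obtain ⟨z, hz⟩ := (h.out.le_iff x y).1 hxy
    exact ⟨z, hz.symm⟩
  le_add_self x y := (h.out.le_iff _ _).2 ⟨y, h.out.add_comm _ _⟩
  le_self_add x y := (h.out.le_iff _ _).2 ⟨y, rfl⟩

theorem lt_succ_iff {x y : M} : x < y + 1 ↔ x ≤ y := h.out.lt_succ x y

theorem succ_le_iff {x y : M} : x + 1 ≤ y ↔ x < y := by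
  rw [show x < y ↔ _ from h.out.lt_iff x y, show x + 1 ≤ y ↔ _ from h.out.le_iff (x + 1) y]
  refine exists_congr fun z => ?_
  change x + 1 + z = y ↔ x + (z + 1) = y
  rw [add_right_comm, add_assoc]

instance : IsStrictOrderedRing M where
  add_le_add_left x y hxy z := by
    obtain ⟨w, rfl⟩ := exists_add_of_le hxy
    rw [add_right_comm]
    exact le_self_add
  le_of_add_le_add_left x y z e := by
    obtain ⟨w, e⟩ := exists_add_of_le e
    have : z = y + w := by
      refine h.out.add_right_cancel (z := x) ?_
      change z + x = y + w + x
      rw [add_comm z, e]; ring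
    rw [this]; exact le_self_add
  zero_le_one := zero_le
  exists_pair_ne := ⟨0 + 1, 0, h.out.succ_ne_zero _⟩
  mul_lt_mul_of_pos_left x hx y z hyz := by
    obtain ⟨v, rfl⟩ := exists_add_of_le (succ_le_iff.2 hyz)
    obtain ⟨u, rfl⟩ := exists_add_of_le (succ_le_iff.2 hx)
    rw [← succ_le_iff]
    refine le_of_le_of_eq (le_self_add (b := u + (0 + 1 + u) * v)) ?_
    ring
  mul_lt_mul_of_pos_right x hx y z hyz := by
    obtain ⟨v, rfl⟩ := exists_add_of_le (succ_le_iff.2 hyz)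
    obtain ⟨u, rfl⟩ := exists_add_of_le (succ_le_iff.2 hx)
    rw [← succ_le_iff]
    refine le_of_le_of_eq (le_self_add (b := u + (0 + 1 + u) * v)) ?_
    ring

theorem numeral_eq_cast (n : ℕ) : numeral M n = (n : M) := by
  induction n with
  | zero => exact Nat.cast_zero.symm
  | succ n ih => rw [Nat.cast_succ, ← ih]; rfl

end Instances

section Overspill

variable {M : Type} [arith.Structure M]

/-- A model of `PA` all of whose elements are numerals is the standard model. -/
theorem NonstandardModel.exists_not_isStd (h : NonstandardModel M) : ∃ d : M, ¬ IsStd d := by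
  by_contra! hstd
  have : Fact (IsPAModel M) := ⟨h.1⟩
  have hadd (x y : ℕ) : ((x + y : ℕ) : M) = addM (x : M) y := Nat.cast_add x y
  have hmul (x y : ℕ) : ((x * y : ℕ) : M) = mulM (x : M) y := Nat.cast_mul x y
  have hlt (x y : ℕ) : ltM (x : M) y ↔ x < y := Nat.cast_lt (α := M)
  let e : ℕ ≃ M := Equiv.ofBijective (Nat.cast : ℕ → M)
    ⟨Nat.cast_injective, fun x => (hstd x).imp fun n hn => by rw [hn, numeral_eq_cast]⟩
  refine h.2 ⟨Language.Equiv.symm (L := arith) ⟨e, fun {n} f v => ?_, fun {n} r v => ?_⟩⟩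
  · change arithFunc n at f
    cases f
    · exact (Nat.cast_zero (R := M)).trans (congrArg (Structure.funMap (L := arith) (M := M)
        (show arith.Functions 0 from arithFunc.zero)) (Subsingleton.elim ![] (e ∘ v)))
    · exact (Nat.cast_one (R := M)).trans (congrArg (Structure.funMap (L := arith) (M := M)
        (show arith.Functions 0 from arithFunc.one)) (Subsingleton.elim ![] (e ∘ v)))
    · exact (hadd (v 0) (v 1)).trans (congrArg _ (vec_eta (e ∘ v)))
    · exact (hmul (v 0) (v 1)).trans (congrArg _ (vec_eta (e ∘ v)))
  · change arithRel n at r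
    cases r
    exact (Iff.of_eq (congrArg _ (vec_eta (e ∘ v)).symm)).trans (hlt (v 0) (v 1))

variable [h : Fact (IsPAModel M)] {n : ℕ}

theorem DF.hadd {t u : (Fin n → M) → M} (ht : DF t) (hu : DF u) : DF fun v => t v + u v :=
  DF.add ht hu

theorem DF.hmul {t u : (Fin n → M) → M} (ht : DF t) (hu : DF u) : DF fun v => t v * u v :=
  DF.mul ht hu

theorem DP.hlt {t u : (Fin n → M) → M} (ht : DF t) (hu : DF u) : DP fun v => t v < u v :=
  DP.lt ht hu

theorem isStd_iff {x : M} : IsStd x ↔ ∃ n : ℕ, x = n := by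
  simp only [IsStd, numeral_eq_cast]

theorem exists_of_lt_cast {x : M} {n : ℕ} (hx : x < n) : ∃ m < n, x = m := by
  induction n with
  | zero => simp at hx
  | succ n ih =>
    rw [Nat.cast_succ, lt_succ_iff] at hx
    rcases hx.lt_or_eq with hx | hx
    · obtain ⟨m, hm, e⟩ := ih hx
      exact ⟨m, by omega, e⟩
    · exact ⟨n, by omega, hx⟩

theorem cast_lt_of_not_isStd {k : M} (hk : ¬ IsStd k) (n : ℕ) : (n : M) < k := by
  by_contra hle
  obtain ⟨m, -, e⟩ := exists_of_lt_cast (lt_of_le_of_lt (not_lt.1 hle)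
    (by exact_mod_cast n.lt_succ_self : (n : M) < (n + 1 : ℕ)))
  exact hk (isStd_iff.2 ⟨m, e⟩)

theorem overspill {d : M} (hd : ¬ IsStd d) {P : M → Prop}
    (hP : DP fun v : Fin 1 → M => P (v 0)) (hn : ∀ n : ℕ, P n) : ∃ k, ¬ IsStd k ∧ P k := by
  by_contra! hk
  refine hk d hd (h.out.induct hP (Nat.cast_zero (R := M) ▸ hn 0 :) (fun x hx => ?_) d)
  obtain ⟨n, rfl⟩ := isStd_iff.1 (not_imp_comm.1 (hk x) (not_not.2 hx))
  exact (Nat.cast_succ (R := M) n ▸ hn (n + 1) :)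

theorem div_unique {m u u' r r' : M} (hr : r < m) (hr' : r' < m)
    (e : u * m + r = u' * m + r') : r = r' := by
  have key : ∀ {u u' r r' : M}, r < m → u * m + r = u' * m + r' → ¬ u < u' := by
    intro u u' r r' hr e hu
    have h1 := mul_le_mul_of_nonneg_right (succ_le_iff.2 hu) (zero_le : 0 ≤ m)
    rw [add_mul, one_mul] at h1
    have : u * m + r < u * m + r :=
      calc u * m + r < u * m + m := by gcongr
        _ ≤ u' * m := h1
        _ ≤ u' * m + r' := le_self_add
        _ = u * m + r := e.symm
    exact lt_irrefl _ this
  have hu : u = u' := le_antisymm (not_lt.1 (key hr' e.symm)) (not_lt.1 (key hr e))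
  subst hu
  exact add_left_cancel e

theorem digitB_iff {a : M} {i : ℕ} :
    digitB a i ↔ ∃ u v : M, a = u * 2 ^ (i + 1) + (2 ^ i + v) ∧ v < 2 ^ i := by
  simp only [digitB, numeral_eq_cast, Nat.cast_pow, Nat.cast_ofNat]
  rfl

theorem digitB_shift_add_cast (d : M) (N : ℕ) {i k : ℕ} (hik : i < k) :
    digitB (d * 2 ^ k + N) i ↔ N.testBit i = true := by
  obtain ⟨j, rfl⟩ := Nat.exists_eq_add_of_lt hik
  set R := N % 2 ^ (i + 1) with hR
  have hRlt : R < 2 ^ (i + 1) := Nat.mod_lt _ (by positivity)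
  have hN : ((2 ^ (i + 1) * (N / 2 ^ (i + 1)) + R : ℕ) : M) = N := by rw [Nat.div_add_mod]
  have ha : d * 2 ^ (i + j + 1) + N = (d * 2 ^ j + (N / 2 ^ (i + 1) : ℕ)) * 2 ^ (i + 1) + R := by
    rw [← hN]; push_cast; ring
  have hbit : N.testBit i = true ↔ 2 ^ i ≤ R := by
    have h1 : R = 2 ^ i * (N / 2 ^ i % 2) + N % 2 ^ i := by
      rw [hR, pow_succ, Nat.mod_mul, add_comm]
    have h2 : N % 2 ^ i < 2 ^ i := Nat.mod_lt _ (by positivity)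
    rw [Nat.testBit_eq_decide_div_mod_eq, decide_eq_true_iff, h1]
    rcases Nat.mod_two_eq_zero_or_one (N / 2 ^ i) with e | e <;> simp [e, h2]
  rw [hbit, digitB_iff, ha]
  constructor
  · rintro ⟨u, v, e, hv⟩
    have := div_unique (m := 2 ^ (i + 1)) (by exact_mod_cast hRlt)
      (by rw [pow_succ, mul_two]; gcongr) e
    have : ((2 ^ i : ℕ) : M) ≤ R := by
      rw [this]; push_cast; exact le_self_add
    exact_mod_cast this
  · intro hle
    obtain ⟨v, hv⟩ := Nat.exists_eq_add_of_le hle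
    refine ⟨_, v, by rw [hv]; push_cast; rfl, ?_⟩
    have : v < 2 ^ i := by rw [pow_succ] at hRlt; omega
    exact_mod_cast this

/-- `r` is the remainder of `c` modulo `(i + 1) * d + 1`. -/
def IsBeta (c d i r : M) : Prop :=
  ∃ q, c = q * ((i + 1) * d + 1) + r ∧ r < (i + 1) * d + 1

theorem DP.isBeta {b c i r : (Fin n → M) → M} (hb : DF b) (hc : DF c) (hi : DF i) (hr : DF r) :
    DP fun v => IsBeta (b v) (c v) (i v) (r v) := by
  have : DP fun v : Fin 4 → M => IsBeta (v 0) (v 1) (v 2) (v 3) := by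
    unfold IsBeta
    apply_rules [DP.ex, DP.and, DP.eq, DP.hlt, DF.hadd, DF.hmul, DF.var, DF.const]
  refine DP.preimage (g := fun v => ![b v, c v, i v, r v]) this ?_
  simpa [Fin.forall_fin_succ] using ⟨hb, hc, hi, hr⟩

theorem IsBeta.unique {c d i r r' : M} (hr : IsBeta c d i r) (hr' : IsBeta c d i r') :
    r = r' := by
  obtain ⟨q, e, hq⟩ := hr
  obtain ⟨q', e', hq'⟩ := hr'
  exact div_unique hq hq' (e.symm.trans e')

theorem isBeta_cast (N i : ℕ) :
    IsBeta (N.unpair.1 : M) (N.unpair.2 : M) i (Nat.beta N i : M) := by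
  refine ⟨(N.unpair.1 / ((i + 1) * N.unpair.2 + 1) : ℕ), ?_, ?_⟩
  · rw [Nat.beta]
    exact_mod_cast (Nat.div_add_mod' _ _).symm
  · rw [Nat.beta]
    exact_mod_cast Nat.mod_lt _ (Nat.succ_pos _)

/-- With suitable parameters, the powers of two with standard exponent are uniformly definable. -/
theorem exists_isBeta_pow {d : M} (hd : ¬ IsStd d) :
    ∃ b c : M, ∀ (i : ℕ) (r : M), IsBeta b c i r ↔ r = 2 ^ i := by
  obtain ⟨k, hk, b, c, h0, hs⟩ := overspill hd (P := fun k => ∃ b c : M, IsBeta b c 0 1 ∧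
      ∀ i, i < k → ∀ r, IsBeta b c i r → IsBeta b c (i + 1) (r + r))
    (by
      apply_rules [DP.isBeta, DP.ex, DP.all, DP.and, DP.imp, DP.hlt, DF.hadd, DF.var, DF.const])
    (by
      intro n
      let l : List ℕ := List.ofFn fun i : Fin (n + 1) => 2 ^ (i : ℕ)
      let N := Nat.unbeta l
      have hN (i : ℕ) (hi : i < n + 1) : IsBeta (N.unpair.1 : M) (N.unpair.2 : M) i (2 ^ i) := by
        have h1 := isBeta_cast (M := M) N i
        have h2 := Nat.beta_unbeta_coe l ⟨i, by simpa [l] using hi⟩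
        have h3 : Nat.beta N i = 2 ^ i := by
          simpa only [l, Fin.getElem_fin, List.getElem_ofFn] using h2
        rw [h3] at h1
        exact_mod_cast h1
      refine ⟨N.unpair.1, N.unpair.2, by simpa using hN 0 (by omega), ?_⟩
      intro i hi r hr
      obtain ⟨m, hm, rfl⟩ := exists_of_lt_cast hi
      rw [hr.unique (hN m (by omega)), ← mul_two, ← pow_succ]
      exact_mod_cast hN (m + 1) (by omega))
  have hpow (i : ℕ) : IsBeta b c i (2 ^ i) := by
    induction i with
    | zero => simpa using h0
    | succ i ih =>
      rw [pow_succ, mul_two, Nat.cast_succ]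
      exact hs i (cast_lt_of_not_isStd hk i) _ ih
  exact ⟨b, c, fun i r => ⟨fun hr => hr.unique (hpow i), fun hr => hr ▸ hpow i⟩⟩

/-- The standard binary digits are uniformly definable with parameters. -/
theorem exists_definable_digit {d : M} (hd : ¬ IsStd d) :
    ∃ B : M → M → Prop, DP (fun v : Fin 2 → M => B (v 0) (v 1)) ∧
      ∀ (a : M) (i : ℕ), B a i ↔ digitB a i := by
  obtain ⟨b, c, hbc⟩ := exists_isBeta_pow hd
  refine ⟨fun a i => ∃ p, IsBeta b c i p ∧ ∃ u v, a = u * (p + p) + (p + v) ∧ v < p, ?_,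
    fun a i => ?_⟩
  · apply_rules [DP.isBeta, DP.ex, DP.and, DP.eq, DP.hlt, DF.hadd, DF.hmul, DF.var, DF.const]
  · simp only [hbc, exists_eq_left, digitB_iff, pow_succ, mul_two]

theorem exists_testBit_iff (X : Set ℕ) (k : ℕ) :
    ∃ N : ℕ, ∀ i < k, N.testBit i = true ↔ i ∈ X := by
  classical
  refine ⟨Nat.ofBits fun i : Fin k => decide ((i : ℕ) ∈ X), fun i hi => ?_⟩
  rw [Nat.testBit_ofBits_lt _ _ hi]
  simp

/-- Arbitrarily large elements have prescribed first digits. -/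
theorem exists_gt_digitB_iff (d : M) (X : Set ℕ) (k : ℕ) :
    ∃ a, d < a ∧ ∀ i < k, digitB a i ↔ i ∈ X := by
  obtain ⟨N, hN⟩ := exists_testBit_iff X k
  refine ⟨(d + 1) * 2 ^ k + N, ?_, fun i hi => by rw [digitB_shift_add_cast _ _ hi, hN i hi]⟩
  rw [← succ_le_iff]
  exact (le_mul_of_one_le_right zero_le (one_le_pow₀ one_le_two)).trans le_self_add

theorem setOf_cast_mem_SSy {d : M} (hd : ¬ IsStd d) {P : M → Prop}
    (hP : DP fun v : Fin 1 → M => P (v 0)) : {i : ℕ | P i} ∈ SSy M := by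
  obtain ⟨B, hB, hdig⟩ := exists_definable_digit hd
  obtain ⟨k, hk, a, ha, hak⟩ := overspill hd
    (P := fun k => ∃ a, d < a ∧ ∀ i, i < k → (B a i ↔ P i))
    (by apply_rules [DP.ex, DP.all, DP.and, DP.imp, DP.iff, DP.hlt, DP.comp₂ hB, DP.comp₁ hP,
          DF.var, DF.const])
    (by
      intro n
      obtain ⟨a, ha, han⟩ := exists_gt_digitB_iff d {i : ℕ | P i} n
      refine ⟨a, ha, fun i hi => ?_⟩
      obtain ⟨m, hm, rfl⟩ := exists_of_lt_cast hi
      rw [hdig, han m hm, Set.mem_ofPred_eq])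
  refine ⟨a, fun hstd => ?_, fun i => ?_⟩
  · obtain ⟨n, rfl⟩ := isStd_iff.1 hstd
    obtain ⟨m, -, e⟩ := exists_of_lt_cast ha
    exact hd (isStd_iff.2 ⟨m, e⟩)
  · rw [← hdig, hak i (cast_lt_of_not_isStd hk i), Set.mem_ofPred_eq]

end Overspill

section Turing

variable {O : ℕ → ℕ}

theorem RecursiveIn.of_partrec {f : ℕ →. ℕ} (hf : Nat.Partrec f) : RecursiveIn O f := by
  induction hf with
  | zero => exact .zero
  | succ => exact .succ
  | left => exact .left
  | right => exact .right
  | pair _ _ h₁ h₂ => exact .pair h₁ h₂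
  | comp _ _ h₁ h₂ => exact .comp h₁ h₂
  | prec _ _ h₁ h₂ => exact .prec h₁ h₂
  | rfind _ h => exact .rfind h

theorem RecursiveIn.of_primrec {f : ℕ → ℕ} (hf : Primrec f) : RecursiveIn O (f : ℕ →. ℕ) :=
  .of_partrec (Nat.Partrec.of_primrec (Primrec.nat_iff.1 hf))

theorem RecursiveIn.comp_total {f g : ℕ → ℕ} (hf : RecursiveIn O (f : ℕ →. ℕ))
    (hg : RecursiveIn O (g : ℕ →. ℕ)) : RecursiveIn O ((fun n => f (g n) : ℕ → ℕ) : ℕ →. ℕ) := by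
  refine (congrArg (RecursiveIn O) (funext fun n => ?_)).mpr (RecursiveIn.comp hf hg)
  exact (Part.bind_some _ _).symm

theorem RecursiveIn.pair_total {f g : ℕ → ℕ} (hf : RecursiveIn O (f : ℕ →. ℕ))
    (hg : RecursiveIn O (g : ℕ →. ℕ)) :
    RecursiveIn O ((fun n => Nat.pair (f n) (g n) : ℕ → ℕ) : ℕ →. ℕ) := by
  refine (congrArg (RecursiveIn O) (funext fun n => ?_)).mpr (RecursiveIn.pair hf hg)
  simp [Seq.seq]

theorem RecursiveIn.prec_total {f g : ℕ → ℕ} (hf : RecursiveIn O (f : ℕ →. ℕ))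
    (hg : RecursiveIn O (g : ℕ →. ℕ)) :
    RecursiveIn O ((fun n => n.unpair.2.rec (f n.unpair.1)
      fun y i => g (Nat.pair n.unpair.1 (Nat.pair y i)) : ℕ → ℕ) : ℕ →. ℕ) := by
  refine (congrArg (RecursiveIn O) (funext fun n => ?_)).mpr (RecursiveIn.prec hf hg)
  simp only [Nat.unpaired, PFun.coe_val]
  induction n.unpair.2 with
  | zero => rfl
  | succ m ih => exact (Part.bind_some _ fun i => Part.some
      (g (Nat.pair n.unpair.1 (Nat.pair m i)))).symm.trans (congrArg
      (Part.bind · fun i => Part.some (g (Nat.pair n.unpair.1 (Nat.pair m i)))) ih)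

variable {S : Set (Set ℕ)}

theorem charFn_of_mem {X : Set ℕ} {n : ℕ} (h : n ∈ X) : charFn X n = 1 := if_pos h

theorem charFn_of_notMem {X : Set ℕ} {n : ℕ} (h : n ∉ X) : charFn X n = 0 := if_neg h

theorem charFn_eq_one_iff {X : Set ℕ} {n : ℕ} : charFn X n = 1 ↔ n ∈ X := by
  by_cases h : n ∈ X <;> simp [charFn_of_mem, charFn_of_notMem, h]

theorem TuringIdeal.preimage_mem (hS : TuringIdeal S) {X : Set ℕ} (hX : X ∈ S) {g : ℕ → ℕ}
    (hg : Primrec g) : {n | g n ∈ X} ∈ S :=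
  hS.2 X hX _ (RecursiveIn.comp_total (f := charFn X) .oracle (.of_primrec hg))

theorem TuringIdeal.inter_mem (hS : TuringIdeal S) {X Y : Set ℕ} (hX : X ∈ S) (hY : Y ∈ S) :
    X ∩ Y ∈ S := by
  refine hS.2 _ (hS.1 X hX Y hY) _ ?_
  have hx (n : ℕ) : 2 * n ∈ turingJoin X Y ↔ n ∈ X := by
    simp only [turingJoin, Set.mem_union, Set.mem_ofPred_eq]
    constructor
    · rintro (⟨m, hm, e⟩ | ⟨m, hm, e⟩)
      · rwa [show n = m by omega]
      · omega
    · exact fun h => .inl ⟨n, h, rfl⟩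
  have hy (n : ℕ) : 2 * n + 1 ∈ turingJoin X Y ↔ n ∈ Y := by
    simp only [turingJoin, Set.mem_union, Set.mem_ofPred_eq]
    constructor
    · rintro (⟨m, hm, e⟩ | ⟨m, hm, e⟩)
      · omega
      · rwa [show n = m by omega]
    · exact fun h => .inr ⟨n, h, rfl⟩
  have h2 : Primrec fun n : ℕ => 2 * n := Primrec.nat_mul.comp (.const 2) .id
  have hmul : Primrec fun n : ℕ => n.unpair.1 * n.unpair.2 :=
    Primrec.nat_mul.comp (Primrec.fst.comp .unpair) (Primrec.snd.comp .unpair)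
  have := RecursiveIn.comp_total (O := charFn (turingJoin X Y)) (.of_primrec hmul)
    (RecursiveIn.pair_total (.comp_total .oracle (.of_primrec h2))
      (.comp_total .oracle (.of_primrec (Primrec.succ.comp h2))))
  unfold TuringLE
  convert this using 2
  funext n
  by_cases h₁ : n ∈ X <;> by_cases h₂ : n ∈ Y <;>
    simp [charFn, hx, hy, h₁, h₂]

/-- The codes of binary sequences whose entries at even places agree with `Y`. -/
def evenTree (Y : Set ℕ) : Set ℕ :=
  {a | ∀ y < a, (Encodable.decode (α := List Bool) a).bind (fun l => l[2 * y]?) ≠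
    some !decide (charFn Y y = 1)}

theorem encode_mem_evenTree {Y : Set ℕ} {s : List Bool} :
    Encodable.encode s ∈ evenTree Y ↔
      ∀ (y : ℕ) (h : 2 * y < s.length), s[2 * y] = true ↔ y ∈ Y := by
  have key (y : ℕ) (h : 2 * y < s.length) :
      s[2 * y]? ≠ some (!decide (charFn Y y = 1)) ↔ (s[2 * y] = true ↔ y ∈ Y) := by
    rw [List.getElem?_eq_getElem h]
    by_cases hy : y ∈ Y <;> cases s[2 * y] <;> simp [hy, charFn_eq_one_iff]
  simp only [evenTree, Set.mem_ofPred_eq, Encodable.encodek, Option.bind_some]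
  constructor
  · intro H y h
    exact (key y h).1 (H y (by have := Encodable.length_le_encode s; omega))
  · intro H y _
    by_cases h : 2 * y < s.length
    · exact (key y h).2 (H y h)
    · rw [List.getElem?_eq_none (by omega)]
      simp

theorem evenTree_turingLE (Y : Set ℕ) : TuringLE (evenTree Y) Y := by
  let m : ℕ × ℕ × ℕ → ℕ := fun p =>
    if (Encodable.decode (α := List Bool) p.1).bind (fun l => l[2 * p.2.1]?) =
      some !decide (p.2.2 = 1) then 0 else 1
  have hm : Primrec m := by
    refine Primrec.ite (Primrec.eq.comp (Primrec.option_bind (Primrec.decode.comp .fst)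
      (Primrec.list_getElem?.comp .snd (Primrec.nat_mul.comp (.const 2)
        (Primrec.fst.comp (Primrec.snd.comp .fst)))))
      (Primrec.option_some.comp (Primrec.not.comp ?_))) (.const 0) (.const 1)
    exact (Primrec.eq.comp (Primrec.snd.comp .snd) (.const 1)).decide
  have hg : RecursiveIn (charFn Y) ((fun n => n.unpair.2.unpair.2 *
      m (n.unpair.1, n.unpair.2.unpair.1, charFn Y n.unpair.2.unpair.1) : ℕ → ℕ) : ℕ →. ℕ) := by
    have h1 : Primrec fun n : ℕ => n.unpair.1 := Primrec.fst.comp .unpair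
    have h2 : Primrec fun n : ℕ => n.unpair.2 := Primrec.snd.comp .unpair
    have h21 := h1.comp h2
    have h22 := h2.comp h2
    have hF : Primrec fun n : ℕ => n.unpair.1.unpair.2.unpair.2 *
        m (n.unpair.1.unpair.1, n.unpair.1.unpair.2.unpair.1, n.unpair.2) :=
      Primrec.nat_mul.comp (h22.comp h1)
        (hm.comp ((h1.comp h1).pair ((h21.comp h1).pair h2)))
    have := RecursiveIn.comp_total (O := charFn Y) (.of_primrec hF)
      (RecursiveIn.pair_total (.of_primrec .id) (.comp_total .oracle (.of_primrec h21)))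
    simpa using this
  have hr := RecursiveIn.comp_total (RecursiveIn.prec_total (.of_primrec (.const 1)) hg)
    (RecursiveIn.pair_total (.of_primrec .id) (.of_primrec .id))
  unfold TuringLE
  convert hr using 2
  funext a
  simp only [id, Nat.unpair_pair]
  have key (b : ℕ) : (b.rec 1 fun y i => i * m (a, y, charFn Y y) : ℕ) =
      if ∀ y < b, (Encodable.decode (α := List Bool) a).bind (fun l => l[2 * y]?) ≠
        some !decide (charFn Y y = 1) then 1 else 0 := by
    induction b with
    | zero => simp
    | succ b ih =>
      simp only [ih, m, Nat.lt_succ_iff_lt_or_eq, or_imp, forall_and, forall_eq]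
      split_ifs <;> simp_all
  rw [key a]
  unfold charFn
  split_ifs <;> first | rfl | contradiction

/-- The number whose binary digits are those of `s`, followed by a leading digit `1`. -/
def listNum (s : List Bool) : ℕ := s.foldr (fun b e => 2 * e + b.toNat) 1

theorem listNum_testBit (s : List Bool) (i : ℕ) (hi : i < s.length) :
    (listNum s).testBit i = s[i] := by
  induction s generalizing i with
  | nil => simp at hi
  | cons b s ih =>
    have : listNum (b :: s) = Nat.bit b (listNum s) := by cases b <;> rfl
    rw [this]
    cases i with
    | zero => simp
    | succ i => simpa [Nat.testBit_bit_succ] using ih i (by simpa using hi)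

theorem listNum_testBit_of_le (s : List Bool) (i : ℕ) (hi : s.length ≤ i) :
    (listNum s).testBit i = decide (i = s.length) := by
  induction s generalizing i with
  | nil =>
    have : listNum [] = Nat.bit true 0 := rfl
    rw [this]
    cases i with
    | zero => simp
    | succ i => rw [Nat.testBit_bit_succ]; simp
  | cons b s ih =>
    have : listNum (b :: s) = Nat.bit b (listNum s) := by cases b <;> rfl
    rw [this]
    cases i with
    | zero => simp at hi
    | succ i => simpa [Nat.testBit_bit_succ] using ih i (by simpa using hi)

theorem primrec_listNum : Primrec listNum := by
  have hb : Primrec Bool.toNat := Primrec.dom_finite _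
  exact Primrec.list_foldr (h := fun _ (p : Bool × ℕ) => 2 * p.2 + p.1.toNat) .id (.const 1)
    (Primrec.nat_add.comp (Primrec.nat_mul.comp (.const 2) (Primrec.snd.comp Primrec.snd))
      (hb.comp (Primrec.fst.comp Primrec.snd))).to₂

theorem TuringIdeal.listNum_mem (hS : TuringIdeal S) {D : Set ℕ} (hD : D ∈ S) :
    ∃ T ∈ S, ∀ s : List Bool, Encodable.encode s ∈ T ↔ listNum s ∈ D := by
  refine ⟨_, hS.preimage_mem hD (g := fun n => listNum ((Encodable.decode n).getD []))
    (primrec_listNum.comp (Primrec.option_getD.comp .decode (.const []))), fun s => ?_⟩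
  simp [Set.mem_ofPred_eq]

end Turing

section Extension

variable {M : Type} [arith.Structure M] [h : Fact (IsPAModel M)]

theorem digitB_cast (N i : ℕ) : digitB (N : M) i ↔ N.testBit i = true := by
  simpa using digitB_shift_add_cast (0 : M) N (Nat.lt_succ_self i)

/-- The join of two binary relations, along the parity of the second argument. -/
def joinRel (G H : M → M → Prop) (x m : M) : Prop :=
  (∃ i, m = i + i ∧ G x i) ∨ ∃ i, m = i + i + 1 ∧ H x i

theorem exists_cast_of_add_self_le {j : M} {m : ℕ} (hj : j + j ≤ m) : ∃ n : ℕ, j = n := by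
  have : j < (m + 1 : ℕ) := by
    push_cast
    exact lt_succ_iff.2 (le_self_add.trans hj)
  obtain ⟨n, -, e⟩ := exists_of_lt_cast this
  exact ⟨n, e⟩

theorem joinRel_even (G H : M → M → Prop) (x : M) (i : ℕ) :
    joinRel G H x (2 * i : ℕ) ↔ G x i := by
  constructor
  · rintro (⟨j, e, hj⟩ | ⟨j, e, hj⟩)
    · obtain ⟨n, rfl⟩ := exists_cast_of_add_self_le e.ge
      have : 2 * i = n + n := by exact_mod_cast e
      rwa [show i = n by omega]
    · obtain ⟨n, rfl⟩ := exists_cast_of_add_self_le (le_self_add.trans e.ge)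
      have : 2 * i = n + n + 1 := by exact_mod_cast e
      omega
  · exact fun hi => .inl ⟨i, by push_cast; ring, hi⟩

theorem joinRel_odd (G H : M → M → Prop) (x : M) (i : ℕ) :
    joinRel G H x (2 * i + 1 : ℕ) ↔ H x i := by
  constructor
  · rintro (⟨j, e, hj⟩ | ⟨j, e, hj⟩)
    · obtain ⟨n, rfl⟩ := exists_cast_of_add_self_le e.ge
      have : 2 * i + 1 = n + n := by exact_mod_cast e
      omega
    · obtain ⟨n, rfl⟩ := exists_cast_of_add_self_le (le_self_add.trans e.ge)
      have : 2 * i + 1 = n + n + 1 := by exact_mod_cast e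
      rwa [show i = n by omega]
  · exact fun hi => .inr ⟨i, by push_cast; ring, hi⟩

theorem DP.joinRel {G H : M → M → Prop} (hG : DP fun v : Fin 2 → M => G (v 0) (v 1))
    (hH : DP fun v : Fin 2 → M => H (v 0) (v 1)) :
    DP fun v : Fin 2 → M => joinRel G H (v 0) (v 1) := by
  unfold Arith.joinRel
  apply_rules [DP.or, DP.ex, DP.and, DP.eq, DP.comp₂ hG, DP.comp₂ hH, DF.hadd, DF.var, DF.const]

/-- Arbitrarily long initial segments of `Y` are cut out by `G` at elements above `d`. -/
def Consistent (d : M) (G : M → M → Prop) (Y : Set ℕ) : Prop :=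
  ∀ k : ℕ, ∃ x, d < x ∧ ∀ i < k, G x (i : ℕ) ↔ i ∈ Y

variable {S : Set (Set ℕ)}

/-- The binary sequences cut out by `G` above `d` form a tree coded in `S`. -/
theorem exists_tree_mem {d : M} (hd : ¬ IsStd d) (hS : TuringIdeal S) (hsub : SSy M ⊆ S)
    {G : M → M → Prop} (hG : DP fun v : Fin 2 → M => G (v 0) (v 1)) :
    ∃ T ∈ S, ∀ s : List Bool, Encodable.encode s ∈ T ↔
      ∃ x, d < x ∧ ∀ (i : ℕ) (hi : i < s.length), s[i] = true ↔ G x i := by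
  obtain ⟨B, hB, hdig⟩ := exists_definable_digit hd
  obtain ⟨T, hT, hTs⟩ := hS.listNum_mem (hsub (setOf_cast_mem_SSy hd
    (P := fun e => ∃ x, d < x ∧ ∀ j, j < e → B e j → ∀ i, i < j → (B e i ↔ G x i))
    (by apply_rules [DP.ex, DP.all, DP.and, DP.imp, DP.iff, DP.hlt, DP.comp₂ hB, DP.comp₂ hG,
          DF.var, DF.const])))
  refine ⟨T, hT, fun s => (hTs s).trans (exists_congr fun x => and_congr_right fun _ => ?_)⟩
  constructor
  · intro hx i hi
    have htop : (listNum s).testBit s.length = true := by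
      rw [listNum_testBit_of_le s _ le_rfl]; simp
    have := hx (s.length : ℕ)
      (by exact_mod_cast Nat.lt_two_pow_self.trans_le (Nat.ge_two_pow_of_testBit htop))
      ((hdig _ _).2 ((digitB_cast _ _).2 htop)) i (by exact_mod_cast hi)
    rw [← this, hdig, digitB_cast, listNum_testBit s i hi]
  · intro hx j hj hBj i hij
    obtain ⟨j, -, rfl⟩ := exists_of_lt_cast hj
    obtain ⟨i, hi, rfl⟩ := exists_of_lt_cast hij
    have hjs : j ≤ s.length := by
      by_contra hjs
      rw [hdig, digitB_cast, listNum_testBit_of_le s j (by omega), decide_eq_true_iff] at hBj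
      omega
    rw [hdig, digitB_cast, listNum_testBit s i (by omega), hx i (by omega)]

theorem Consistent.exists_join {d : M} (hd : ¬ IsStd d) (hS : ScottSet S) (hsub : SSy M ⊆ S)
    {G H : M → M → Prop} (hG : DP fun v : Fin 2 → M => G (v 0) (v 1))
    (hH : DP fun v : Fin 2 → M => H (v 0) (v 1)) {Y : Set ℕ} (hY : Y ∈ S)
    (hGY : Consistent d G Y) :
    ∃ P ∈ S, Consistent d (joinRel G H) P ∧ ∀ i, 2 * i ∈ P ↔ i ∈ Y := by
  classical
  obtain ⟨T, hT, hTs⟩ := exists_tree_mem hd hS.2.1 hsub (hG.joinRel hH)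
  have htree : IsBinTreeSet (T ∩ evenTree Y) := by
    rintro s ⟨hs₁, hs₂⟩ t ht
    rw [hTs] at hs₁
    rw [encode_mem_evenTree] at hs₂
    obtain ⟨x, hdx, hx⟩ := hs₁
    refine ⟨(hTs t).2 ⟨x, hdx, fun i hi => ?_⟩, encode_mem_evenTree.2 fun y hy => ?_⟩
    · rw [ht.getElem hi, hx]
    · rw [ht.getElem hy, hs₂]
  have hinf : TreeInf (T ∩ evenTree Y) := by
    have (k : ℕ) : ∃ s : List Bool, s.length = k ∧ Encodable.encode s ∈ T ∩ evenTree Y := by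
      obtain ⟨x, hdx, hx⟩ := hGY k
      refine ⟨List.ofFn fun i : Fin k => decide (joinRel G H x (i : ℕ)), by simp,
        (hTs _).2 ⟨x, hdx, fun i hi => by simp⟩, encode_mem_evenTree.2 fun y hy => ?_⟩
      rw [List.length_ofFn] at hy
      rw [List.getElem_ofFn, decide_eq_true_iff, ← hx y (by omega)]
      exact joinRel_even G H x y
    choose s hs hsT using this
    exact Set.infinite_of_injective_forall_mem (f := s)
      (fun a b e => by rw [← hs a, ← hs b, e]) hsT
  obtain ⟨P, hP, hpath⟩ := hS.2.2 _ (hS.2.1.inter_mem hT (hS.2.1.2 Y hY _ (evenTree_turingLE Y)))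
    htree hinf
  have hpath := hpath (fun i => decide (i ∈ P)) (by simp)
  refine ⟨P, hP, fun k => ?_, fun i => ?_⟩
  · obtain ⟨x, hdx, hx⟩ := (hTs _).1 (hpath k).1
    refine ⟨x, hdx, fun i hi => ?_⟩
    have := hx i (by rwa [List.length_ofFn])
    rw [List.getElem_ofFn, decide_eq_true_iff] at this
    exact this.symm
  · have := encode_mem_evenTree.1 (hpath (2 * i + 1)).2 i (by rw [List.length_ofFn]; omega)
    rwa [List.getElem_ofFn, decide_eq_true_iff] at this

end Extension

instance : Countable arith.Symbols := by
  have hF : Countable (Σ n, arith.Functions n) := by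
    refine Function.Surjective.countable (α := Fin 4) (f := ![⟨0, arithFunc.zero⟩,
      ⟨0, arithFunc.one⟩, ⟨2, arithFunc.add⟩, ⟨2, arithFunc.mul⟩]) ?_
    rintro ⟨n, f⟩
    change arithFunc n at f
    cases f
    exacts [⟨0, rfl⟩, ⟨1, rfl⟩, ⟨2, rfl⟩, ⟨3, rfl⟩]
  have hR : Countable (Σ n, arith.Relations n) := by
    refine Function.Surjective.countable (α := Unit) (f := fun _ => ⟨2, arithRel.lt⟩) ?_
    rintro ⟨n, r⟩
    change arithRel n at r
    cases r
    exact ⟨(), rfl⟩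
  exact inferInstanceAs (Countable ((Σ n, arith.Functions n) ⊕ Σ n, arith.Relations n))

section Generic

variable {M : Type} [arith.Structure M]

theorem countable_setOf_DF [Countable M] :
    {f : M → M | DF fun v : Fin 1 → M => f (v 0)}.Countable := by
  have hC : {s : Set (Option (Fin 1) → M) |
      Set.Definable (Set.univ : Set M) arith s}.Countable := by
    refine (Set.countable_range fun φ : arith[[(Set.univ : Set M)]].Formula (Option (Fin 1)) =>
      Set.ofPred φ.Realize).mono ?_
    rintro s ⟨φ, rfl⟩
    exact ⟨φ, rfl⟩
  refine Set.MapsTo.countable_of_injOn (f := fun f : M → M =>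
    Function.tupleGraph fun v : Fin 1 → M => f (v 0)) (fun f hf => hf) ?_ hC
  intro f _ g _ e
  funext x
  have := (Set.ext_iff.1 e fun o => o.elim (f x) fun _ => x).1 (by simp [Function.tupleGraph])
  simpa [Function.tupleGraph, eq_comm] using this

theorem DF.of_graph {f : M → M} (hf : DP fun v : Fin 2 → M => f (v 0) = v 1) :
    DF fun v : Fin 1 → M => f (v 0) :=
  Set.Definable.preimage_comp ![some 0, none] hf

variable [h : Fact (IsPAModel M)] {S : Set (Set ℕ)}

/-- The least number principle. -/
theorem exists_least {P : M → Prop} (hP : DP fun v : Fin 1 → M => P (v 0)) (hne : ∃ y, P y) :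
    ∃ y, P y ∧ ∀ z, z < y → ¬ P z := by
  by_contra! hno
  obtain ⟨y, hy⟩ := hne
  have key : ∀ x : M, ∀ z, z < x → ¬ P z := by
    refine h.out.induct (P := fun x => ∀ z, z < x → ¬ P z) ?_ ?_ ?_
    · apply_rules [DP.not, DP.all, DP.imp, DP.hlt, DP.comp₁ hP, DF.var]
    · exact fun z hz => absurd hz (h.out.not_lt_zero z)
    · intro x ih z hz hPz
      have hzx : z ≤ x := lt_succ_iff.1 hz
      obtain ⟨w, hw, hPw⟩ := hno z hPz
      exact ih w (hw.trans_le hzx) hPw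
  exact key (y + 1) y (lt_succ_iff.2 le_rfl) hy

/-- Definable relations have definable Skolem functions. -/
theorem exists_skolem {R : M → M → Prop} (hR : DP fun v : Fin 2 → M => R (v 0) (v 1)) :
    ∃ f : M → M, DF (fun v : Fin 1 → M => f (v 0)) ∧ ∀ x y, R x y → R x (f x) := by
  have hleast (x : M) : ∃ y, (R x y ∨ y = 0 ∧ ∀ z, ¬ R x z) ∧
      ∀ z, z < y → ¬ (R x z ∨ z = 0 ∧ ∀ z, ¬ R x z) := by
    refine exists_least ?_ ?_
    · apply_rules [DP.or, DP.and, DP.all, DP.not, DP.eq, DP.comp₂ hR, DF.var, DF.const]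
    · by_cases hx : ∃ y, R x y
      · exact hx.imp fun y hy => .inl hy
      · exact ⟨0, .inr ⟨rfl, not_exists.1 hx⟩⟩
  choose f hf hmin using hleast
  refine ⟨f, DF.of_graph ?_, fun x y hxy => (hf x).resolve_right fun H => H.2 y hxy⟩
  have : DP fun v : Fin 2 → M => (R (v 0) (v 1) ∨ v 1 = 0 ∧ ∀ z, ¬ R (v 0) z) ∧
      ∀ z, z < v 1 → ¬ (R (v 0) z ∨ z = 0 ∧ ∀ z, ¬ R (v 0) z) := by
    apply_rules [DP.not, DP.or, DP.and, DP.all, DP.imp, DP.eq, DP.hlt, DP.comp₂ hR, DF.var,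
      DF.const]
  convert! this using 3 with v
  constructor
  · intro e
    rw [← e]
    exact ⟨hf _, hmin _⟩
  · rintro ⟨h₁, h₂⟩
    exact le_antisymm (not_lt.1 fun hlt => hmin _ _ hlt h₁) (not_lt.1 fun hlt => h₂ _ hlt (hf _))

/-- There is a sequence of elements above `d`, eventually with digits `X`, along which
the digits of every definable function converge to a member of `S`. -/
theorem exists_generic_seq [Countable M] {d : M} (hd : ¬ IsStd d) (hS : ScottSet S)
    (hsub : SSy M ⊆ S) {X : Set ℕ} (hX : X ∈ S) :
    ∃ x : ℕ → M, (∀ m, d < x m) ∧ (∀ i, ∀ᶠ m in Filter.atTop, digitB (x m) i ↔ i ∈ X) ∧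
      ∀ f : M → M, DF (fun v : Fin 1 → M => f (v 0)) →
        ∃ Z ∈ S, ∀ i, ∀ᶠ m in Filter.atTop, digitB (f (x m)) i ↔ i ∈ Z := by
  obtain ⟨B, hB, hdig⟩ := exists_definable_digit hd
  obtain ⟨F, hF⟩ := (countable_setOf_DF (M := M)).exists_eq_range ⟨fun x => x, DF.var 0⟩
  have hFd (n : ℕ) : DF fun v : Fin 1 → M => F n (v 0) := by
    have : F n ∈ {f : M → M | DF fun v : Fin 1 → M => f (v 0)} := hF ▸ ⟨n, rfl⟩
    exact this
  have hH (n : ℕ) : DP fun v : Fin 2 → M => (fun x i => B (F n x) i) (v 0) (v 1) :=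
    DP.comp₂ hB (DF.comp₁ (hFd n) (DF.var 0)) (DF.var 1)
  let C := {p : (M → M → Prop) × Set ℕ //
    DP (fun v : Fin 2 → M => p.1 (v 0) (v 1)) ∧ p.2 ∈ S ∧ Consistent d p.1 p.2}
  have hstep (n : ℕ) (c : C) : ∃ c' : C, c'.1.1 = joinRel c.1.1 (fun x i => B (F n x) i) ∧
      ∀ i, 2 * i ∈ c'.1.2 ↔ i ∈ c.1.2 := by
    obtain ⟨P, hP, hcons, hPY⟩ := Consistent.exists_join
      (H := fun x i => B (F n x) i) hd hS hsub c.2.1 (hH n) c.2.2.1 c.2.2.2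
    exact ⟨⟨⟨joinRel c.1.1 fun x i => B (F n x) i, P⟩,
      DP.joinRel (H := fun x i => B (F n x) i) c.2.1 (hH n), hP, hcons⟩, rfl, hPY⟩
  choose next hnext₁ hnext₂ using hstep
  let c : ℕ → C := fun n => n.rec ⟨⟨B, X⟩, hB, hX, fun k => by
    simpa only [hdig] using exists_gt_digitB_iff d X k⟩ next
  have hG (n j i : ℕ) (x : M) :
      (c (n + j)).1.1 x (2 ^ j * i : ℕ) ↔ (c n).1.1 x i := by
    induction j with
    | zero => simp
    | succ j ih =>
      rw [← ih, pow_succ', mul_assoc, ← add_assoc]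
      exact (congrFun (congrFun (hnext₁ (n + j) (c (n + j))) x) _).to_iff.trans
        (joinRel_even _ _ x _)
  have hY (n j i : ℕ) : 2 ^ j * i ∈ (c (n + j)).1.2 ↔ i ∈ (c n).1.2 := by
    induction j with
    | zero => simp
    | succ j ih =>
      rw [← ih, pow_succ', mul_assoc, ← add_assoc]
      exact hnext₂ (n + j) (c (n + j)) _
  choose x hdx hx using fun m => (c m).2.2.2 (2 ^ m * m)
  have hlim (n i : ℕ) : ∀ᶠ m in Filter.atTop, (c n).1.1 (x m) i ↔ i ∈ (c n).1.2 := by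
    filter_upwards [Filter.eventually_ge_atTop n, Filter.eventually_gt_atTop i] with m hm hi
    obtain ⟨j, rfl⟩ := Nat.exists_eq_add_of_le hm
    rw [← hG n j, ← hY n j]
    exact hx _ _ (Nat.mul_lt_mul_of_le_of_lt (Nat.pow_le_pow_right two_pos (by omega)) hi
      (by positivity))
  refine ⟨x, hdx, fun i => ?_, fun f hf => ?_⟩
  · simp only [← hdig]
    exact hlim 0 i
  · obtain ⟨n, rfl⟩ : f ∈ Set.range F := hF ▸ hf
    refine ⟨{i | 2 * i + 1 ∈ (c (n + 1)).1.2}, hS.2.1.preimage_mem (c (n + 1)).2.2.1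
      (Primrec.succ.comp (Primrec.nat_mul.comp (.const 2) .id)), fun i => ?_⟩
    filter_upwards [hlim (n + 1) (2 * i + 1)] with m hm
    rw [← hm, ← hdig]
    exact ((congrFun (congrFun (hnext₁ n (c n)) (x m)) _).to_iff.trans
        (joinRel_odd _ _ (x m) i)).symm

end Generic

section Formulas

/-- The symbol `+` of the language of arithmetic. -/
def addSymbol : arith.Functions 2 := arithFunc.add

/-- The symbol `·` of the language of arithmetic. -/
def mulSymbol : arith.Functions 2 := arithFunc.mul

/-- The symbol `<` of the language of arithmetic. -/
def ltSymbol : arith.Relations 2 := arithRel.lt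

/-- The closed term denoting the numeral `n`. -/
def numeralTerm (α : Type) : ℕ → arith.Term α
  | 0 => Term.func (L := arith) arithFunc.zero ![]
  | n + 1 => addSymbol.apply₂ (numeralTerm α n) (Term.func (L := arith) arithFunc.one ![])

theorem realize_numeralTerm {N α : Type} [arith.Structure N] (v : α → N) (n : ℕ) :
    (numeralTerm α n).realize v = numeral N n := by
  induction n with
  | zero =>
    exact congrArg (Structure.funMap (L := arith) (M := N)
      (show arith.Functions 0 from arithFunc.zero)) (Subsingleton.elim _ ![])
  | succ n ih =>
    rw [numeralTerm, Term.realize_functions_apply₂, ih]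
    exact congrArg (addM (numeral N n)) (congrArg (Structure.funMap (L := arith) (M := N)
      (show arith.Functions 0 from arithFunc.one)) (Subsingleton.elim _ ![]))

/-- The formula expressing that `x` is the numeral `n`. -/
def numeralFormula (n : ℕ) : arith.Formula (Fin 1) :=
  Term.equal (Term.var 0) (numeralTerm (Fin 1) n)

theorem realize_numeralFormula {N : Type} [arith.Structure N] (v : Fin 1 → N) (n : ℕ) :
    (numeralFormula n).Realize v ↔ v 0 = numeral N n := by
  rw [numeralFormula, Formula.realize_equal, realize_numeralTerm, Term.realize_var]

/-- The formula expressing that the `i`-th binary digit is `1`. -/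
def digitFormula (i : ℕ) : arith.Formula (Fin 1) :=
  BoundedFormula.ex (BoundedFormula.ex
    (Term.bdEqual (Term.var (Sum.inl 0))
      (addSymbol.apply₂
        (mulSymbol.apply₂ (Term.var (Sum.inr 0)) (numeralTerm _ (2 ^ (i + 1))))
        (addSymbol.apply₂ (numeralTerm _ (2 ^ i)) (Term.var (Sum.inr 1)))) ⊓
      ltSymbol.boundedFormula₂ (Term.var (Sum.inr 1)) (numeralTerm _ (2 ^ i))))

theorem realize_digitFormula {N : Type} [arith.Structure N] (v : Fin 1 → N) (i : ℕ) :
    (digitFormula i).Realize v ↔ digitB (v 0) i := by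
  simp only [digitFormula, Formula.Realize, BoundedFormula.realize_ex, BoundedFormula.realize_inf,
    BoundedFormula.realize_bdEqual, BoundedFormula.realize_rel₂, Term.realize_functions_apply₂,
    realize_numeralTerm, Term.realize_var]
  rfl

end Formulas

section Hull

variable {M : Type} [arith.Structure M]

theorem DP.realize {n : ℕ} (φ : arith.BoundedFormula Empty n) :
    DP fun v : Fin n → M => φ.Realize default v := by
  refine Set.Definable.mono (Set.empty_definable_iff.2
    ⟨φ.toFormula.relabel (Sum.elim Empty.elim id), ?_⟩) (Set.empty_subset _)
  ext v
  rw [Set.mem_ofPred_eq, Set.mem_ofPred_eq, Formula.realize_relabel,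
    BoundedFormula.realize_toFormula]
  exact Iff.of_eq (congrArg₂ _ (Subsingleton.elim _ _) rfl)

/-- The definable functions, evaluated along `x` and taken modulo an ultrafilter, form a model
satisfying the theorem of Łoś. -/
theorem exists_definable_ultrapower [Fact (IsPAModel M)] (u : Ultrafilter ℕ) (x : ℕ → M) :
    ∃ (N : Type) (_ : arith.Structure N)
      (cl : {f : M → M // DF fun v : Fin 1 → M => f (v 0)} → N), Function.Surjective cl ∧
      ∀ {k : ℕ} (φ : arith.Formula (Fin k))
        (f : Fin k → {f : M → M // DF fun v : Fin 1 → M => f (v 0)}),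
        φ.Realize (fun i => cl (f i)) ↔
          ∀ᶠ m in (u : Filter ℕ), φ.Realize fun i => (f i).1 (x m) := by
  have : Nonempty M := ⟨0⟩
  let D := {f : M → M // DF fun v : Fin 1 → M => f (v 0)}
  let K := (u : Filter ℕ).Product fun _ => M
  let mk : (ℕ → M) → K := @Quotient.mk' _ ((u : Filter ℕ).productSetoid fun _ => M)
  let cl : D → K := fun f => mk fun m => f.1 (x m)
  let N : arith.Substructure K :=
    { carrier := Set.range cl
      fun_mem := by
        intro n F z hz
        choose f hf using hz
        refine ⟨⟨fun y => Structure.funMap F fun i => (f i).1 y, DF.funMap F fun i => (f i).2⟩, ?_⟩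
        rw [← funext hf]
        exact (Ultraproduct.funMap_cast F fun i m => (f i).1 (x m)).symm }
  have hN : N.IsElementary := by
    refine N.isElementary_of_exists fun n φ z a ha => ?_
    obtain ⟨g, rfl⟩ := Quotient.exists_rep a
    choose f hf using fun i => (z i).2
    have hsnoc (g : ℕ → M) : (Fin.snoc ((↑) ∘ z) (mk g) : Fin (n + 1) → K) =
        fun i => mk ((Fin.snoc (fun i m => (f i).1 (x m)) g : Fin (n + 1) → ℕ → M) i) := by
      funext i
      refine Fin.lastCases ?_ (fun i => ?_) i
      · simp only [Fin.snoc_last]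
      · simp only [Fin.snoc_castSucc]
        exact (hf i).symm
    have hlos (g : ℕ → M) : φ.Realize default (Fin.snoc ((↑) ∘ z) (mk g)) ↔
        ∀ᶠ m in (u : Filter ℕ), φ.Realize default
          (Fin.snoc (fun i => (f i).1 (x m)) (g m) : Fin (n + 1) → M) := by
      rw [hsnoc]
      refine Iff.trans (Iff.of_eq (congrArg₂ _ (Subsingleton.elim _ _) rfl))
        ((Ultraproduct.boundedFormula_realize_cast φ (fun e : Empty => e.elim) _).trans
          (Filter.eventually_congr (.of_forall fun m => Iff.of_eq
            (congrArg₂ _ (Subsingleton.elim _ _) (funext fun i => ?_)))))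
      refine Fin.lastCases ?_ (fun i => ?_) i
      · simp only [Fin.snoc_last]
      · simp only [Fin.snoc_castSucc]
    obtain ⟨s, hs, hsR⟩ := exists_skolem
      (R := fun y w : M => φ.Realize default (Fin.snoc (fun i => (f i).1 y) w : Fin (n + 1) → M))
      (DP.preimage (g := fun v => Fin.snoc (fun i => (f i).1 (v 0)) (v 1)) (DP.realize φ)
        (by
          refine Fin.lastCases ?_ fun i => ?_
          · simpa only [Fin.snoc_last] using DF.var 1
          · simpa only [Fin.snoc_castSucc] using DF.comp₁ (f i).2 (DF.var 0)))
    refine ⟨⟨cl ⟨s, hs⟩, _, rfl⟩, (hlos _).2 ?_⟩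
    filter_upwards [(hlos g).1 ha] with m hm using hsR _ _ hm
  refine ⟨N, inferInstance, fun f => ⟨cl f, f, rfl⟩, ?_, fun {k} φ f => ?_⟩
  · rintro ⟨_, f, rfl⟩
    exact ⟨f, rfl⟩
  · rw [← Ultraproduct.realize_formula_cast φ fun i m => (f i).1 (x m)]
    exact ((ElementarySubstructure.subtype ⟨N, hN⟩).map_formula φ
      fun i => ⟨cl (f i), f i, rfl⟩).symm

end Hull

end Arith

open Arith in
/-- **Ehrenfeucht.** If `S` is a Scott set and `M` a countable non-standard model of
`PA` with `SSy M ⊆ S`, then for every `X ∈ S` there is a countable elementary extension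
`N` of `M` with `X ∈ SSy N ⊆ S`. -/
theorem statement_4 (S : Set (Set ℕ)) (hS : ScottSet S)
    (M : Type) [arith.Structure M] (hM : NonstandardModel M) (hMc : Countable M)
    (hsub : SSy M ⊆ S) (X : Set ℕ) (hX : X ∈ S) :
    ∃ (N : Type) (_ : arith.Structure N) (_ : M ↪ₑ[arith] N),
      Countable N ∧ X ∈ SSy N ∧ SSy N ⊆ S := by
  have : Fact (IsPAModel M) := ⟨hM.1⟩
  obtain ⟨d, hd⟩ := hM.exists_not_isStd
  obtain ⟨x, hdx, hxX, hxS⟩ := exists_generic_seq hd hS hsub hX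
  obtain ⟨N, _, cl, hcl, hlos⟩ := exists_definable_ultrapower (Filter.hyperfilter ℕ) x
  have hdigit (f) (i : ℕ) :
      digitB (cl f) i ↔ ∀ᶠ m in (Filter.hyperfilter ℕ : Filter ℕ), digitB (f.1 (x m)) i := by
    simpa only [realize_digitFormula] using hlos (digitFormula i) fun _ => f
  have hlim (f) {Z : Set ℕ} (hZ : ∀ i, ∀ᶠ m in Filter.atTop, digitB (f.1 (x m)) i ↔ i ∈ Z) (i : ℕ) :
      i ∈ Z ↔ digitB (cl f) i := by
    rw [hdigit, Filter.eventually_congr ((hZ i).filter_mono Nat.hyperfilter_le_atTop),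
      Filter.eventually_const]
  refine ⟨N, inferInstance, ⟨fun a => cl ⟨fun _ => a, DF.const a⟩, fun n φ v => ?_⟩, ?_,
    ⟨cl ⟨fun y => y, DF.var 0⟩, ?_, hlim _ hxX⟩, ?_⟩
  · refine (hlos φ fun i => ⟨fun _ => v i, DF.const (v i)⟩).trans ?_
    exact Filter.eventually_const (f := (Filter.hyperfilter ℕ : Filter ℕ)) (p := φ.Realize v)
  · have : Countable {f : M → M // DF fun v : Fin 1 → M => f (v 0)} :=
      countable_setOf_DF.to_subtype
    exact hcl.countable
  · rintro ⟨n, hn⟩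
    have := (hlos (numeralFormula n) fun _ => ⟨fun y => y, DF.var 0⟩).1
      ((realize_numeralFormula _ n).2 hn)
    obtain ⟨m, hm⟩ := this.exists
    rw [realize_numeralFormula, numeral_eq_cast] at hm
    obtain ⟨k, -, hk⟩ := exists_of_lt_cast ((hdx m).trans_eq hm)
    exact hd (isStd_iff.2 ⟨k, hk⟩)
  · rintro Y ⟨a, -, ha⟩
    obtain ⟨f, rfl⟩ := hcl a
    obtain ⟨Z, hZ, hfZ⟩ := hxS f.1 f.2
    have : Y = Z := Set.ext fun i => (ha i).trans (hlim f hfZ i).symm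
    exact this ▸ hZ
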